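/- Fix J, p ∈ ℕ and d ∈ ℝ, let P be a polynomial in 3 real variables that is homogeneous of degree J and harmonic, and let H : EuclideanSpace ℝ (Fin 3) → ℝ be its polynomial function. Define u on ℝ³ ∖ {0} as follows: if (d+2−J)·(d+3+J) ≠ 0, set u(x) = ‖x‖^{d+2−J}·H(x)·∑_{i=0}^{p} ∑_{n=0}^{i} (−1)^i · (p!/(p−i)!) · (log‖x‖)^{p−i} / ( (d+2−J)^{n+1}·(d+3+J)^{i−n+1} ); if d+2 = J or d+2 = −(J+1), set u(x) = ‖x‖^{d+2−J}·H(x)·∑_{i=0}^{p} (−1)^i · (p!/(p+1−i)!) · (log‖x‖)^{p+1−i} / (2d+5)^{i+1}. Then for every x ≠ 0, Δu(x) = ‖x‖^{d−J}·(log‖x‖)ᵖ·H(x). (This verifies, in spacetime dimension 3, that the operator □⁻¹ defined in Appendix D by □⁻¹[ r^d Y_{JM}(x/r)(log r)^p ] = r^{d+2} Y_{JM}(x/r)(log r)^p · D^{(p)}(d+2, J, r) is a right inverse of the Laplacian.) -/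

import Mathlib

/-- The Laplacian of `f : EuclideanSpace ℝ (Fin 3) → ℝ` at `x`: the sum over the
standard coordinate directions of the second directional derivatives of `f` at `x`. -/
noncomputable def laplacian {D : ℕ} (f : EuclideanSpace ℝ (Fin D) → ℝ)
    (x : EuclideanSpace ℝ (Fin D)) : ℝ :=
  ∑ i : Fin D,
    fderiv ℝ (fun y => fderiv ℝ f y (EuclideanSpace.single i (1 : ℝ))) x
      (EuclideanSpace.single i (1 : ℝ))

/-!
Put `t = log r`, let `H` be a harmonic homogeneous polynomial of degree `J` and let `q` be a
polynomial in `t`. The product rule for the Laplacian, together with Euler's identity for `H`, gives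
`Δ (r ^ a * q(t) * H) = r ^ (a - 2) * H * ((∂ + a) (∂ + b) q)(t)` with `∂ = d/dt` and
`b = a + D - 2 + 2 * J`. So one has to solve `(∂ + a) (∂ + b) q = t ^ p` with `q` a polynomial.
Since `∂` is locally nilpotent on polynomials, a constant-coefficient operator whose symbol is
invertible as a power series is inverted by a truncation of the inverse series. For `a, b ≠ 0` the
Cauchy product of the two geometric series produces the double sum. When `a * b = 0` the operator is
`∂ (∂ + (a + b))`, and one inverts `∂ + (a + b)` on the antiderivative `t ^ (p + 1) / (p + 1)`.
-/

open Filter Topology Polynomial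
open scoped RealInnerProductSpace

section DiffOp

variable {R : Type*} [CommRing R]

/-- The differential operator `g(d/dX)` on `R[X]` with constant coefficients and symbol `g`. -/
noncomputable def diffOp (g : R[X]) : R[X] →ₗ[R] R[X] :=
  aeval (derivative : Module.End R R[X]) g

lemma diffOp_mul_apply (g h f : R[X]) : diffOp (g * h) f = diffOp g (diffOp h f) := by
  simp [diffOp]

lemma diffOp_X_add_C_apply (a : R) (f : R[X]) : diffOp (X + C a) f = derivative f + C a * f := by
  simp [diffOp, Module.algebraMap_end_apply, smul_eq_C_mul]

lemma diffOp_X_pow_apply (n : ℕ) (f : R[X]) : diffOp (X ^ n) f = derivative^[n] f := by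
  simp [diffOp, Module.End.pow_apply]

lemma diffOp_eq_zero_of_X_pow_dvd {g f : R[X]} {n : ℕ} (hg : X ^ n ∣ g) (hf : f.natDegree < n) :
    diffOp g f = 0 := by
  obtain ⟨h, rfl⟩ := hg
  rw [mul_comm, diffOp_mul_apply, diffOp_X_pow_apply, iterate_derivative_eq_zero hf, map_zero]

lemma X_pow_dvd_mul_trunc_sub_one {g : R[X]} {φ : PowerSeries R} (h : (g : PowerSeries R) * φ = 1)
    (n : ℕ) : X ^ n ∣ g * φ.trunc n - 1 := by
  rw [X_pow_dvd_iff]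
  intro d hd
  have htrunc := PowerSeries.trunc_mul_trunc (n := n) (g : PowerSeries R) φ
  rw [h] at htrunc
  have hcoeff := congrArg (coeff · d) htrunc
  simpa [PowerSeries.coeff_trunc, hd, ← Polynomial.coe_mul, Polynomial.coeff_one,
    PowerSeries.coeff_one, sub_eq_zero] using hcoeff

lemma diffOp_diffOp_trunc_apply {g : R[X]} {φ : PowerSeries R} (h : (g : PowerSeries R) * φ = 1)
    {f : R[X]} {n : ℕ} (hf : f.natDegree < n) : diffOp g (diffOp (φ.trunc n) f) = f := by
  have hzero := diffOp_eq_zero_of_X_pow_dvd (X_pow_dvd_mul_trunc_sub_one h n) hf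
  rw [← diffOp_mul_apply]
  simpa [diffOp, sub_eq_zero] using hzero

lemma diffOp_trunc_apply (φ : PowerSeries R) (n : ℕ) (f : R[X]) :
    diffOp (φ.trunc n) f = ∑ i ∈ Finset.range n, φ.coeff i • derivative^[i] f := by
  simp [diffOp, PowerSeries.trunc_apply, ← smul_X_eq_monomial, Module.End.pow_apply]

end DiffOp

section LogFactors

variable {K : Type*} [Field K]

lemma mul_inv_X_add_C {a : K} (ha : a ≠ 0) :
    (PowerSeries.X + PowerSeries.C a) * (PowerSeries.X + PowerSeries.C a)⁻¹ = 1 :=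
  PowerSeries.mul_inv_cancel _ (by simpa)

lemma coeff_inv_X_add_C {a : K} (ha : a ≠ 0) (n : ℕ) :
    (PowerSeries.X + PowerSeries.C a)⁻¹.coeff n = (-1) ^ n / a ^ (n + 1) := by
  have hinv : (PowerSeries.X + PowerSeries.C a)⁻¹ =
      PowerSeries.mk fun n => (-1) ^ n / a ^ (n + 1) := by
    rw [PowerSeries.inv_eq_iff_mul_eq_one (by simpa)]
    ext (_ | n)
    · simp [mul_add, ha]
    · simp only [mul_add, map_add, PowerSeries.coeff_succ_mul_X, PowerSeries.coeff_mk,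
        PowerSeries.coeff_mul_C, PowerSeries.coeff_one, n.succ_ne_zero, if_false]
      field_simp
      ring
  rw [hinv, PowerSeries.coeff_mk]

lemma coeff_inv_X_add_C_mul_inv_X_add_C {a b : K} (ha : a ≠ 0) (hb : b ≠ 0) (i : ℕ) :
    ((PowerSeries.X + PowerSeries.C a)⁻¹ * (PowerSeries.X + PowerSeries.C b)⁻¹).coeff i =
      ∑ n ∈ Finset.range (i + 1), (-1) ^ i / (a ^ (n + 1) * b ^ (i - n + 1)) := by
  simp only [PowerSeries.coeff_mul, coeff_inv_X_add_C ha, coeff_inv_X_add_C hb]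
  rw [Finset.Nat.sum_antidiagonal_eq_sum_range_succ
    (fun n m => (-1 : K) ^ n / a ^ (n + 1) * ((-1) ^ m / b ^ (m + 1)))]
  refine Finset.sum_congr rfl fun n hn => ?_
  rw [div_mul_div_comm, ← pow_add, Nat.add_sub_cancel' (Finset.mem_range_succ_iff.mp hn)]

/-- The factor `(log r) ^ p * D^(p)` of `□⁻¹` away from resonance, as a polynomial in `t = log r`:
the polynomial solution of `(∂ + a) (∂ + b) q = t ^ p` with `∂ = d/dt`. It is obtained by applying
the power series `(∂ + a)⁻¹ (∂ + b)⁻¹`, truncated beyond order `p`, to `t ^ p`. -/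
noncomputable def logFactor (a b : K) (p : ℕ) : K[X] :=
  diffOp (((PowerSeries.X + PowerSeries.C a)⁻¹ * (PowerSeries.X + PowerSeries.C b)⁻¹).trunc (p + 1))
    (X ^ p)

/-- The factor `(log r) ^ p * D^(p)` of `□⁻¹` at resonance, as a polynomial in `t = log r`: a
polynomial solution of `∂ (∂ + c) q = t ^ p`. Adding a constant to `q` gives another solution; this
one is `(∂ + c)⁻¹ (t ^ (p + 1) / (p + 1))` with the power series `(∂ + c)⁻¹` truncated beyond order
`p`, so it has no constant term. -/
noncomputable def resonantLogFactor (c : K) (p : ℕ) : K[X] :=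
  diffOp ((PowerSeries.X + PowerSeries.C c)⁻¹.trunc (p + 1)) (C ((p : K) + 1)⁻¹ * X ^ (p + 1))

lemma diffOp_logFactor {a b : K} (ha : a ≠ 0) (hb : b ≠ 0) (p : ℕ) :
    diffOp ((X + C a) * (X + C b)) (logFactor a b p) = X ^ p := by
  refine diffOp_diffOp_trunc_apply ?_ (by simp)
  push_cast
  rw [mul_mul_mul_comm, mul_inv_X_add_C ha, mul_inv_X_add_C hb, one_mul]

variable [CharZero K]

lemma eval_iterate_derivative_X_pow {m i : ℕ} (hi : i ≤ m) (t : K) :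
    (derivative^[i] (X ^ m : K[X])).eval t =
      (m.factorial : K) / ((m - i).factorial : K) * t ^ (m - i) := by
  have hfac : (m.descFactorial i : K) = (m.factorial : K) / ((m - i).factorial : K) := by
    rw [eq_div_iff (by exact_mod_cast (m - i).factorial_ne_zero), mul_comm]
    exact_mod_cast Nat.factorial_mul_descFactorial hi
  simp [iterate_derivative_X_pow_eq_smul, hfac]

lemma eval_logFactor {a b : K} (ha : a ≠ 0) (hb : b ≠ 0) (p : ℕ) (t : K) :
    (logFactor a b p).eval t = ∑ i ∈ Finset.range (p + 1), ∑ n ∈ Finset.range (i + 1),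
      (-1) ^ i * ((p.factorial : K) / ((p - i).factorial : K)) * t ^ (p - i)
        / (a ^ (n + 1) * b ^ (i - n + 1)) := by
  rw [logFactor, diffOp_trunc_apply, eval_finsetSum]
  refine Finset.sum_congr rfl fun i hi => ?_
  rw [eval_smul, eval_iterate_derivative_X_pow (Finset.mem_range_succ_iff.mp hi),
    coeff_inv_X_add_C_mul_inv_X_add_C ha hb, smul_eq_mul, Finset.sum_mul]
  refine Finset.sum_congr rfl fun n _ => ?_
  ring

lemma diffOp_resonantLogFactor {a b : K} (hab : a * b = 0) (hsum : a + b ≠ 0) (p : ℕ) :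
    diffOp ((X + C a) * (X + C b)) (resonantLogFactor (a + b) p) = X ^ p := by
  have hp : (p : K) + 1 ≠ 0 := by exact_mod_cast p.succ_ne_zero
  have hsymbol : (X + C a) * (X + C b) = X * (X + C (a + b)) := by
    have hC : C a * C b = 0 := by rw [← C_mul, hab, C_0]
    rw [C_add]
    linear_combination hC
  have hinv : ((X + C (a + b) : K[X]) : PowerSeries K) *
      (PowerSeries.X + PowerSeries.C (a + b))⁻¹ = 1 := by
    simpa using mul_inv_X_add_C hsum
  have hderiv : diffOp X (C ((p : K) + 1)⁻¹ * X ^ (p + 1)) = X ^ p := by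
    have hX : diffOp (X : K[X]) = derivative := aeval_X _
    rw [hX, derivative_C_mul, derivative_X_pow_succ, ← mul_assoc, ← C_mul, inv_mul_cancel₀ hp, C_1,
      one_mul]
  rw [hsymbol, resonantLogFactor, mul_comm X, diffOp_mul_apply, ← diffOp_mul_apply X, mul_comm X,
    diffOp_mul_apply, hderiv, diffOp_diffOp_trunc_apply hinv (by simp)]

lemma eval_resonantLogFactor {c : K} (hc : c ≠ 0) (p : ℕ) (t : K) :
    (resonantLogFactor c p).eval t = ∑ i ∈ Finset.range (p + 1),
      (-1) ^ i * ((p.factorial : K) / ((p + 1 - i).factorial : K)) * t ^ (p + 1 - i)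
        / c ^ (i + 1) := by
  have hp : (p : K) + 1 ≠ 0 := by exact_mod_cast p.succ_ne_zero
  rw [resonantLogFactor, diffOp_trunc_apply, eval_finsetSum]
  refine Finset.sum_congr rfl fun i hi => ?_
  rw [eval_smul, iterate_derivative_C_mul, eval_C_mul,
    eval_iterate_derivative_X_pow (Finset.mem_range.mp hi).le, coeff_inv_X_add_C hc,
    smul_eq_mul, Nat.factorial_succ]
  push_cast
  field_simp

end LogFactors

section SecondDerivatives

variable {E : Type*} [NormedAddCommGroup E] [NormedSpace ℝ E] {f g : E → ℝ} {x : E}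

lemma differentiableAt_fderiv_apply (hf : ContDiffAt ℝ 2 f x) (v : E) :
    DifferentiableAt ℝ (fun y => fderiv ℝ f y v) x :=
  ((hf.fderiv_right (m := 1) le_rfl).clm_apply contDiffAt_const).differentiableAt one_ne_zero

lemma fderiv_fderiv_mul_apply (hf : ContDiffAt ℝ 2 f x) (hg : ContDiffAt ℝ 2 g x) (v : E) :
    fderiv ℝ (fun y => fderiv ℝ (fun z => f z * g z) y v) x v =
      fderiv ℝ (fun y => fderiv ℝ f y v) x v * g x + 2 * (fderiv ℝ f x v * fderiv ℝ g x v) +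
        f x * fderiv ℝ (fun y => fderiv ℝ g y v) x v := by
  have hfirst : (fun y => fderiv ℝ (fun z => f z * g z) y v) =ᶠ[𝓝 x]
      fun y => f y * fderiv ℝ g y v + g y * fderiv ℝ f y v := by
    filter_upwards [hf.eventually (by simp), hg.eventually (by simp)] with y hfy hgy
    rw [fderiv_fun_mul (hfy.differentiableAt two_ne_zero) (hgy.differentiableAt two_ne_zero)]
    rfl
  have hf' := hf.differentiableAt two_ne_zero
  have hg' := hg.differentiableAt two_ne_zero
  have hf'' := differentiableAt_fderiv_apply hf v
  have hg'' := differentiableAt_fderiv_apply hg v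
  rw [hfirst.fderiv_eq, fderiv_fun_add (hf'.fun_mul hg'') (hg'.fun_mul hf''),
    fderiv_fun_mul hf' hg'', fderiv_fun_mul hg' hf'']
  simp only [_root_.add_apply, _root_.smul_apply, smul_eq_mul]
  ring

end SecondDerivatives

section Radial

variable {E : Type*} [NormedAddCommGroup E] [InnerProductSpace ℝ E] {F : ℝ → ℝ} {x : E}

lemma hasFDerivAt_log_norm (hx : x ≠ 0) :
    HasFDerivAt (fun y : E => Real.log ‖y‖) ((‖x‖ ^ 2)⁻¹ • innerSL ℝ x) x := by
  have hsq := ((hasStrictFDerivAt_norm_sq x).hasFDerivAt.log (by simpa)).const_mul (1 / 2 : ℝ)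
  have hlog : (fun y : E => Real.log ‖y‖) = fun y => 1 / 2 * Real.log (‖y‖ ^ 2) := by
    ext y
    rw [Real.log_pow]
    push_cast
    ring
  rw [hlog]
  refine hsq.congr_fderiv ?_
  ext v
  simp only [one_div, _root_.smul_apply, coe_innerSL_apply, nsmul_eq_mul, Nat.cast_ofNat,
    smul_eq_mul]
  ring

lemma fderiv_comp_log_norm_apply (hF : DifferentiableAt ℝ F (Real.log ‖x‖)) (hx : x ≠ 0) (v : E) :
    fderiv ℝ (fun y => F (Real.log ‖y‖)) x v = deriv F (Real.log ‖x‖) / ‖x‖ ^ 2 * ⟪x, v⟫ := by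
  have hcomp := hF.hasDerivAt.comp_hasFDerivAt x (hasFDerivAt_log_norm hx)
  rw [HasFDerivAt.fderiv (f := fun y => F (Real.log ‖y‖)) hcomp]
  simp only [_root_.smul_apply, coe_innerSL_apply, smul_eq_mul]
  ring

lemma contDiffAt_comp_log_norm {n : WithTop ℕ∞} (hF : ContDiffAt ℝ n F (Real.log ‖x‖))
    (hx : x ≠ 0) : ContDiffAt ℝ n (fun y => F (Real.log ‖y‖)) x :=
  hF.comp x ((contDiffAt_norm ℝ hx).log (norm_ne_zero_iff.mpr hx))

lemma fderiv_fderiv_comp_log_norm_apply (hF : ContDiffAt ℝ 2 F (Real.log ‖x‖)) (hx : x ≠ 0)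
    (v : E) :
    fderiv ℝ (fun y => fderiv ℝ (fun z => F (Real.log ‖z‖)) y v) x v =
      (deriv (deriv F) (Real.log ‖x‖) - 2 * deriv F (Real.log ‖x‖)) / ‖x‖ ^ 4 * ⟪x, v⟫ ^ 2 +
        deriv F (Real.log ‖x‖) / ‖x‖ ^ 2 * ‖v‖ ^ 2 := by
  have hfirst : (fun y => fderiv ℝ (fun z => F (Real.log ‖z‖)) y v) =ᶠ[𝓝 x]
      fun y => deriv F (Real.log ‖y‖) / ‖y‖ ^ 2 * ⟪y, v⟫ := by
    have hlog := (hasFDerivAt_log_norm hx).continuousAt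
    filter_upwards [hlog.eventually (hF.eventually (by simp)), isOpen_ne.mem_nhds hx] with y hFy hy
    exact fderiv_comp_log_norm_apply (hFy.differentiableAt two_ne_zero) hy v
  have hF' : DifferentiableAt ℝ (deriv F) (Real.log ‖x‖) :=
    (hF.derivWithin (m := 1) le_rfl).differentiableAt one_ne_zero
  have hinner : HasFDerivAt (fun y => ⟪y, v⟫) (innerSL ℝ v) x :=
    (innerSL ℝ v).hasFDerivAt.congr_of_eventuallyEq (.of_forall fun y => real_inner_comm v y)
  have hsecond := ((hF'.hasDerivAt.comp_hasFDerivAt x (hasFDerivAt_log_norm hx)).fun_mul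
    ((hasDerivAt_inv (by simpa)).comp_hasFDerivAt x
      (hasStrictFDerivAt_norm_sq x).hasFDerivAt)).fun_mul hinner
  have hnorm : ‖x‖ ≠ 0 := norm_ne_zero_iff.mpr hx
  rw [hfirst.fderiv_eq]
  simp only [Function.comp_def, ← div_eq_mul_inv] at hsecond
  rw [hsecond.fderiv]
  simp only [neg_smul, smul_neg, smul_add, _root_.add_apply, _root_.smul_apply, _root_.neg_apply,
    coe_innerSL_apply, real_inner_self_eq_norm_sq, smul_eq_mul, nsmul_eq_mul, Nat.cast_ofNat]
  field_simp
  ring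

end Radial

section Euclidean

variable {ι : Type*} [Fintype ι] [DecidableEq ι] {g : EuclideanSpace ℝ ι → ℝ} {F : ℝ → ℝ}
  {x : EuclideanSpace ℝ ι}

lemma fderiv_apply_self_eq_sum (g : EuclideanSpace ℝ ι → ℝ) (x : EuclideanSpace ℝ ι) :
    fderiv ℝ g x x = ∑ i, x i * fderiv ℝ g x (EuclideanSpace.single i 1) := by
  have hbasis : x = ∑ i, x i • EuclideanSpace.single i (1 : ℝ) := by
    simpa using ((EuclideanSpace.basisFun ι ℝ).sum_repr x).symm
  simpa only [map_sum, map_smul, smul_eq_mul] using congrArg (fderiv ℝ g x) hbasis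

lemma sum_fderiv_comp_log_norm_mul_fderiv (hF : DifferentiableAt ℝ F (Real.log ‖x‖)) (hx : x ≠ 0) :
    ∑ i, fderiv ℝ (fun y => F (Real.log ‖y‖)) x (EuclideanSpace.single i 1) *
        fderiv ℝ g x (EuclideanSpace.single i 1) =
      deriv F (Real.log ‖x‖) / ‖x‖ ^ 2 * fderiv ℝ g x x := by
  simp [fderiv_comp_log_norm_apply hF hx, fderiv_apply_self_eq_sum g,
    EuclideanSpace.inner_single_right, Finset.mul_sum, mul_assoc]

end Euclidean

section PolynomialFunctions

variable {ι : Type*}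

lemma hasFDerivAt_eval [Fintype ι] (P : MvPolynomial ι ℝ) (x : EuclideanSpace ℝ ι) :
    HasFDerivAt (fun y : EuclideanSpace ℝ ι => MvPolynomial.eval (fun i => y i) P)
      (∑ i, MvPolynomial.eval (fun i => x i) (MvPolynomial.pderiv i P) •
        (EuclideanSpace.proj i : EuclideanSpace ℝ ι →L[ℝ] ℝ)) x := by
  classical
  induction P using MvPolynomial.induction_on with
  | C a => simpa using hasFDerivAt_const a x
  | add P Q hP hQ =>
    simp only [map_add, add_smul, Finset.sum_add_distrib]
    exact hP.add hQ
  | mul_X P j hP =>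
    simp only [map_mul, MvPolynomial.eval_X]
    refine (hP.fun_mul (EuclideanSpace.proj (𝕜 := ℝ) j).hasFDerivAt).congr_fderiv ?_
    ext v
    simp [Derivation.leibniz, MvPolynomial.pderiv_X, Pi.single_apply, add_mul,
      Finset.sum_add_distrib, Finset.mul_sum, apply_ite, mul_assoc]

lemma fderiv_eval_apply_single [Finite ι] [DecidableEq ι] (P : MvPolynomial ι ℝ)
    (x : EuclideanSpace ℝ ι) (i : ι) :
    fderiv ℝ (fun y : EuclideanSpace ℝ ι => MvPolynomial.eval (fun i => y i) P) x
      (EuclideanSpace.single i 1) = MvPolynomial.eval (fun i => x i) (MvPolynomial.pderiv i P) := by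
  cases nonempty_fintype ι
  simp [(hasFDerivAt_eval P x).fderiv]

lemma fderiv_eval_apply_self [Finite ι] {J : ℕ} {P : MvPolynomial ι ℝ} (hP : P.IsHomogeneous J)
    (x : EuclideanSpace ℝ ι) :
    fderiv ℝ (fun y : EuclideanSpace ℝ ι => MvPolynomial.eval (fun i => y i) P) x x =
      J * MvPolynomial.eval (fun i => x i) P := by
  cases nonempty_fintype ι
  have heuler := congrArg (MvPolynomial.eval fun i => x i) hP.sum_X_mul_pderiv
  simpa [(hasFDerivAt_eval P x).fderiv, mul_comm] using heuler

lemma contDiff_eval [Fintype ι] (P : MvPolynomial ι ℝ) {n : WithTop ℕ∞} :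
    ContDiff ℝ n fun y : EuclideanSpace ℝ ι => MvPolynomial.eval (fun i => y i) P :=
  (AnalyticOnNhd.eval_continuousLinearMap' (σ := ι) (fun i =>
    (EuclideanSpace.proj i : EuclideanSpace ℝ ι →L[ℝ] ℝ)) P).contDiff

end PolynomialFunctions

section Laplacian

variable {D : ℕ} {f g : EuclideanSpace ℝ (Fin D) → ℝ} {F : ℝ → ℝ} {x : EuclideanSpace ℝ (Fin D)}

lemma laplacian_congr (h : f =ᶠ[𝓝 x] g) : laplacian f x = laplacian g x := by
  refine Finset.sum_congr rfl fun i _ => ?_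
  have hfirst : (fun y => fderiv ℝ f y (EuclideanSpace.single i 1)) =ᶠ[𝓝 x]
      fun y => fderiv ℝ g y (EuclideanSpace.single i 1) :=
    (h.fderiv (𝕜 := ℝ)).fun_comp (· (EuclideanSpace.single i 1))
  rw [hfirst.fderiv_eq]

lemma laplacian_mul (hf : ContDiffAt ℝ 2 f x) (hg : ContDiffAt ℝ 2 g x) :
    laplacian (fun y => f y * g y) x =
      laplacian f x * g x + 2 * ∑ i, fderiv ℝ f x (EuclideanSpace.single i 1) *
        fderiv ℝ g x (EuclideanSpace.single i 1) + f x * laplacian g x := by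
  simp only [laplacian, fderiv_fderiv_mul_apply hf hg, Finset.sum_add_distrib, Finset.sum_mul,
    Finset.mul_sum]

lemma laplacian_comp_log_norm (hF : ContDiffAt ℝ 2 F (Real.log ‖x‖)) (hx : x ≠ 0) :
    laplacian (fun y => F (Real.log ‖y‖)) x =
      (deriv (deriv F) (Real.log ‖x‖) + (D - 2) * deriv F (Real.log ‖x‖)) / ‖x‖ ^ 2 := by
  have hsq : ∑ i, x i ^ 2 = ‖x‖ ^ 2 := by simp [EuclideanSpace.norm_sq_eq]
  simp only [laplacian, fderiv_fderiv_comp_log_norm_apply hF hx, EuclideanSpace.inner_single_right,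
    Real.ringHom_apply, one_mul, PiLp.norm_single, norm_one, one_pow, mul_one,
    Finset.sum_add_distrib, ← Finset.mul_sum, hsq, Finset.sum_const, Finset.card_univ,
    Fintype.card_fin, nsmul_eq_mul]
  field_simp
  ring

lemma laplacian_comp_log_norm_mul {k : ℝ} (hF : ContDiffAt ℝ 2 F (Real.log ‖x‖)) (hx : x ≠ 0)
    (hg : ContDiffAt ℝ 2 g x) (hharm : laplacian g x = 0) (heuler : fderiv ℝ g x x = k * g x) :
    laplacian (fun y => F (Real.log ‖y‖) * g y) x =
      (deriv (deriv F) (Real.log ‖x‖) + (D - 2 + 2 * k) * deriv F (Real.log ‖x‖)) / ‖x‖ ^ 2 *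
        g x := by
  rw [laplacian_mul (contDiffAt_comp_log_norm hF hx) hg, laplacian_comp_log_norm hF hx,
    sum_fderiv_comp_log_norm_mul_fderiv (hF.differentiableAt two_ne_zero) hx, hharm, heuler]
  ring

lemma laplacian_eval (P : MvPolynomial (Fin D) ℝ) (x : EuclideanSpace ℝ (Fin D)) :
    laplacian (fun y => MvPolynomial.eval (fun i => y i) P) x =
      MvPolynomial.eval (fun i => x i) (∑ i, MvPolynomial.pderiv i (MvPolynomial.pderiv i P)) := by
  simp only [laplacian, fderiv_eval_apply_single, map_sum]

end Laplacian

section SeparatedFunctions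

lemma hasDerivAt_exp_mul_eval (a : ℝ) (q : ℝ[X]) (t : ℝ) :
    HasDerivAt (fun s => Real.exp (a * s) * q.eval s)
      (Real.exp (a * t) * (diffOp (X + C a) q).eval t) t := by
  refine (((hasDerivAt_const_mul a).exp).fun_mul (q.hasDerivAt t)).congr_deriv ?_
  rw [diffOp_X_add_C_apply, eval_add, eval_mul, eval_C]
  ring

lemma deriv_exp_mul_eval (a : ℝ) (q : ℝ[X]) :
    deriv (fun t => Real.exp (a * t) * q.eval t) =
      fun t => Real.exp (a * t) * (diffOp (X + C a) q).eval t :=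
  funext fun t => (hasDerivAt_exp_mul_eval a q t).deriv

variable {D J : ℕ} {P : MvPolynomial (Fin D) ℝ} {x : EuclideanSpace ℝ (Fin D)}

lemma laplacian_rpow_norm_mul_eval_mul_eval_log (hhom : P.IsHomogeneous J)
    (hharm : ∑ i, MvPolynomial.pderiv i (MvPolynomial.pderiv i P) = 0) (a : ℝ) (q : ℝ[X])
    (hx : x ≠ 0) :
    laplacian (fun y => ‖y‖ ^ a * MvPolynomial.eval (fun i => y i) P * q.eval (Real.log ‖y‖)) x =
      ‖x‖ ^ (a - 2) * MvPolynomial.eval (fun i => x i) P *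
        (diffOp ((X + C a) * (X + C (a + (D - 2 + 2 * J)))) q).eval (Real.log ‖x‖) := by
  have hexp : ∀ y : EuclideanSpace ℝ (Fin D), y ≠ 0 → ‖y‖ ^ a = Real.exp (a * Real.log ‖y‖) :=
    fun y hy => by rw [Real.rpow_def_of_pos (norm_pos_iff.mpr hy), mul_comm]
  have hradial : (fun y : EuclideanSpace ℝ (Fin D) =>
      ‖y‖ ^ a * MvPolynomial.eval (fun i => y i) P * q.eval (Real.log ‖y‖)) =ᶠ[𝓝 x] fun y =>
        Real.exp (a * Real.log ‖y‖) * q.eval (Real.log ‖y‖) *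
          MvPolynomial.eval (fun i => y i) P := by
    filter_upwards [isOpen_ne.mem_nhds hx] with y hy
    rw [hexp y hy, mul_right_comm]
  have hsmooth : ContDiff ℝ 2 fun t => Real.exp (a * t) * q.eval t :=
    (contDiff_const.mul contDiff_id).exp.mul (q.contDiff_aeval 2)
  have hharm' : laplacian (fun y => MvPolynomial.eval (fun i => y i) P) x = 0 := by
    rw [laplacian_eval, hharm, map_zero]
  have hpow : ‖x‖ ^ (a - 2) = Real.exp (a * Real.log ‖x‖) / ‖x‖ ^ 2 := by
    rw [Real.rpow_sub (norm_pos_iff.mpr hx), Real.rpow_two, hexp x hx]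
  rw [laplacian_congr hradial, laplacian_comp_log_norm_mul hsmooth.contDiffAt hx
    (contDiff_eval P).contDiffAt hharm' (fderiv_eval_apply_self hhom x), deriv_exp_mul_eval,
    deriv_exp_mul_eval, hpow, mul_comm (X + C a), diffOp_mul_apply]
  simp only [diffOp_X_add_C_apply _ (diffOp _ q), eval_add, eval_mul, eval_C]
  ring

lemma laplacian_eq_of_diffOp_eq_X_pow (hhom : P.IsHomogeneous J)
    (hharm : ∑ i, MvPolynomial.pderiv i (MvPolynomial.pderiv i P) = 0) {d : ℝ} {p : ℕ} {q : ℝ[X]}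
    (hq : diffOp ((X + C (d + 2 - J)) * (X + C (d + D + J))) q = X ^ p) (hx : x ≠ 0) :
    laplacian (fun y =>
        ‖y‖ ^ (d + 2 - J) * MvPolynomial.eval (fun i => y i) P * q.eval (Real.log ‖y‖)) x =
      ‖x‖ ^ (d - J) * Real.log ‖x‖ ^ p * MvPolynomial.eval (fun i => x i) P := by
  have hroot : d + 2 - (J : ℝ) + (D - 2 + 2 * J) = d + D + J := by ring
  have hexponent : d + 2 - (J : ℝ) - 2 = d - J := by ring
  rw [laplacian_rpow_norm_mul_eval_mul_eval_log hhom hharm _ q hx, hroot, hq, hexponent, eval_pow,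
    eval_X, mul_right_comm]

end SeparatedFunctions

theorem box_inverse_is_right_inverse_general {D : ℕ} (J p : ℕ) (d : ℝ)
    (P : MvPolynomial (Fin D) ℝ) (hhom : P.IsHomogeneous J)
    (hharm : ∑ i : Fin D, MvPolynomial.pderiv i (MvPolynomial.pderiv i P) = 0) :
    ((d + 2 - (J : ℝ)) * (d + D + (J : ℝ)) ≠ 0 →
      ∀ x : EuclideanSpace ℝ (Fin D), x ≠ 0 →
        laplacian (fun y =>
            ‖y‖ ^ (d + 2 - (J : ℝ)) * MvPolynomial.eval (fun i => y i) P *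
              ∑ i ∈ Finset.range (p + 1), ∑ n ∈ Finset.range (i + 1),
                (-1 : ℝ) ^ i * ((p.factorial : ℝ) / ((p - i).factorial : ℝ))
                  * Real.log ‖y‖ ^ (p - i)
                  / ((d + 2 - (J : ℝ)) ^ (n + 1) * (d + D + (J : ℝ)) ^ (i - n + 1))) x
          = ‖x‖ ^ (d - (J : ℝ)) * Real.log ‖x‖ ^ p
              * MvPolynomial.eval (fun i => x i) P) ∧
    (2 * d + (D + 2) ≠ 0 → (d + 2 = (J : ℝ) ∨ d + 2 = -((J : ℝ) + (D - 2))) →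
      ∀ x : EuclideanSpace ℝ (Fin D), x ≠ 0 →
        laplacian (fun y =>
            ‖y‖ ^ (d + 2 - (J : ℝ)) * MvPolynomial.eval (fun i => y i) P *
              ∑ i ∈ Finset.range (p + 1),
                (-1 : ℝ) ^ i * ((p.factorial : ℝ) / ((p + 1 - i).factorial : ℝ))
                  * Real.log ‖y‖ ^ (p + 1 - i) / (2 * d + (D + 2)) ^ (i + 1)) x
          = ‖x‖ ^ (d - (J : ℝ)) * Real.log ‖x‖ ^ p
              * MvPolynomial.eval (fun i => x i) P) := by
  refine ⟨fun hne x hx => ?_, fun hsum hres x hx => ?_⟩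
  · obtain ⟨ha, hb⟩ := mul_ne_zero_iff.mp hne
    simp only [← eval_logFactor ha hb]
    exact laplacian_eq_of_diffOp_eq_X_pow hhom hharm (diffOp_logFactor ha hb p) hx
  · have hab : (d + 2 - (J : ℝ)) * (d + D + J) = 0 := by
      rcases hres with h | h <;> rw [mul_eq_zero]
      exacts [.inl (by linarith), .inr (by linarith)]
    have hroots : 2 * d + ((D : ℝ) + 2) = d + 2 - J + (d + D + J) := by ring
    rw [hroots] at hsum ⊢
    simp only [← eval_resonantLogFactor hsum]
    exact laplacian_eq_of_diffOp_eq_X_pow hhom hharm (diffOp_resonantLogFactor hab hsum p) hx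

/-- In spacetime dimension 3, the operator `□⁻¹` of Appendix D,
`□⁻¹[ r^d Y_{JM}(x/r)(log r)^p ] = r^{d+2} Y_{JM}(x/r)(log r)^p · D^{(p)}(d+2,J,r)`,
is a right inverse of the Laplacian.  Writing a degree-`J` spherical harmonic as
`Y(x/r) = H(x)/r^J` with `H` the polynomial function of a harmonic homogeneous
polynomial `P` of degree `J`: in the non-resonant case `(d+2−J)(d+3+J) ≠ 0` the
function
`u(x) = ‖x‖^{d+2−J}·H(x)·∑_{i=0}^{p}∑_{n=0}^{i}(−1)^i (p!/(p−i)!) (log‖x‖)^{p−i}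
  / ((d+2−J)^{n+1}(d+3+J)^{i−n+1})`
satisfies `Δu(x) = ‖x‖^{d−J}(log‖x‖)^p H(x)` for `x ≠ 0`, and in the resonant case
`d+2 = J` or `d+2 = −(J+1)` the same holds for
`u(x) = ‖x‖^{d+2−J}·H(x)·∑_{i=0}^{p}(−1)^i (p!/(p+1−i)!) (log‖x‖)^{p+1−i}/(2d+5)^{i+1}`. -/
theorem box_inverse_is_right_inverse (J p : ℕ) (d : ℝ)
    (P : MvPolynomial (Fin 3) ℝ) (hhom : P.IsHomogeneous J)
    (hharm : ∑ i : Fin 3, MvPolynomial.pderiv i (MvPolynomial.pderiv i P) = 0) :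
    ((d + 2 - (J : ℝ)) * (d + 3 + (J : ℝ)) ≠ 0 →
      ∀ x : EuclideanSpace ℝ (Fin 3), x ≠ 0 →
        laplacian (fun y =>
            ‖y‖ ^ (d + 2 - (J : ℝ)) * MvPolynomial.eval (fun i => y i) P *
              ∑ i ∈ Finset.range (p + 1), ∑ n ∈ Finset.range (i + 1),
                (-1 : ℝ) ^ i * ((p.factorial : ℝ) / ((p - i).factorial : ℝ))
                  * Real.log ‖y‖ ^ (p - i)
                  / ((d + 2 - (J : ℝ)) ^ (n + 1) * (d + 3 + (J : ℝ)) ^ (i - n + 1))) x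
          = ‖x‖ ^ (d - (J : ℝ)) * Real.log ‖x‖ ^ p
              * MvPolynomial.eval (fun i => x i) P) ∧
    ((d + 2 = (J : ℝ) ∨ d + 2 = -((J : ℝ) + 1)) →
      ∀ x : EuclideanSpace ℝ (Fin 3), x ≠ 0 →
        laplacian (fun y =>
            ‖y‖ ^ (d + 2 - (J : ℝ)) * MvPolynomial.eval (fun i => y i) P *
              ∑ i ∈ Finset.range (p + 1),
                (-1 : ℝ) ^ i * ((p.factorial : ℝ) / ((p + 1 - i).factorial : ℝ))
                  * Real.log ‖y‖ ^ (p + 1 - i) / (2 * d + 5) ^ (i + 1)) x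
          = ‖x‖ ^ (d - (J : ℝ)) * Real.log ‖x‖ ^ p
              * MvPolynomial.eval (fun i => x i) P) := by
  have hgen := box_inverse_is_right_inverse_general J p d P hhom hharm
  simp only [Nat.cast_ofNat, show (3 : ℝ) + 2 = 5 by norm_num,
    show (3 : ℝ) - 2 = 1 by norm_num] at hgen
  refine ⟨hgen.1, fun hres => hgen.2 ?_ hres⟩
  rcases hres with h | h <;> linarith [J.cast_nonneg (α := ℝ)]
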